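/- arXiv:2008.12437 — 5 statements merged into one kernel-verified Lean document; each statement's English description precedes it below -/
import Mathlib

section
/- Let V be an n-dimensional representation of a group G over a field k, and let m be an integer with 0 < m < n. Then V is m-dense if and only if V is (n-m)-dense. -/
/-!
Let `p + q = n = dim V`. The wedge product `⋀^p V × ⋀^q V → ⋀^n V` takes values in a line and is
nondegenerate: multiplying `w ∈ ⋀^q V` by the basis monomial indexed by the complement of a
`q`-element set `t` isolates, up to sign, the coordinate of `w` at `t`.

The annihilator in `⋀^p V` of a `G`-invariant `W ≤ ⋀^q V` is `G`-invariant, because `G` acts by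
algebra automorphisms. If `V` is `p`-dense, this annihilator is either all of `⋀^p V`, and then
`W = 0` by nondegeneracy, or `0`, and then `⋀^p V` embeds into `Hom(W, ⋀^n V)`, so that
`dim W ≥ (n choose p) = (n choose q) = dim ⋀^q V` and `W = ⋀^q V`.
-/

open Module

variable {k G V : Type*} [Field k] [Group G] [AddCommGroup V] [Module k V]

/-- A finite-dimensional representation `ρ : G → GL(V)` is `m`-thick if for any subspaces
`V₁, V₂ ⊆ V` with `dim V₁ = m` and `dim V₂ = dim V - m` there is `g ∈ G` with
`(ρ(g) V₁) ⊕ V₂ = V`. -/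
def IsMThick (ρ : Representation k G V) (m : ℕ) : Prop :=
  ∀ V₁ V₂ : Submodule k V, finrank k V₁ = m → finrank k V₂ = finrank k V - m →
    ∃ g : G, IsCompl (V₁.map (ρ g)) V₂

/-- A representation is `m`-dense if the induced representation on the `m`-th exterior power
`⋀^m V` (a submodule of the exterior algebra, on which `g` acts by the functorially induced map)
is irreducible: `⋀^m V` is nonzero and has no `G`-invariant subspace other than `0` and itself. -/
def IsMDense (ρ : Representation k G V) (m : ℕ) : Prop :=
  ⋀[k]^m V ≠ ⊥ ∧
  ∀ W : Submodule k (ExteriorAlgebra k V), W ≤ ⋀[k]^m V →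
    (∀ g : G, W.map (ExteriorAlgebra.map (ρ g)).toLinearMap ≤ W) →
    W = ⊥ ∨ W = ⋀[k]^m V

/-- A representation is irreducible if `V` is nonzero and has no `G`-invariant subspace
other than `0` and `V`. -/
def RepIrreducible (ρ : Representation k G V) : Prop :=
  (∃ v : V, v ≠ 0) ∧
  ∀ W : Submodule k V, (∀ g : G, W.map (ρ g) ≤ W) → W = ⊥ ∨ W = ⊤

/-- A representation is thick if it is `m`-thick for every `0 < m < dim V`. -/
def IsThick (ρ : Representation k G V) : Prop :=
  ∀ m : ℕ, 0 < m → m < finrank k V → IsMThick ρ m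

/-- A representation is dense if it is `m`-dense for every `0 < m < dim V`. -/
def IsDense (ρ : Representation k G V) : Prop :=
  ∀ m : ℕ, 0 < m → m < finrank k V → IsMDense ρ m

section CommRing

variable {R M N : Type*} [CommRing R] [AddCommGroup M] [Module R M] [AddCommGroup N] [Module R N]

/-- The annihilator of `W` in degree `p`: those `x ∈ ⋀^p M` with `x ∧ w = 0` for all `w ∈ W`.
Like the subspaces in `IsMDense`, it is a submodule of the whole exterior algebra. -/
def wedgeAnnihilator (p : ℕ) (W : Submodule R (ExteriorAlgebra R M)) :
    Submodule R (ExteriorAlgebra R M) :=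
  ⋀[R]^p M ⊓ ⨅ w ∈ W, LinearMap.ker (LinearMap.mulRight R w)

lemma mem_wedgeAnnihilator {p : ℕ} {W : Submodule R (ExteriorAlgebra R M)}
    {x : ExteriorAlgebra R M} :
    x ∈ wedgeAnnihilator p W ↔ x ∈ ⋀[R]^p M ∧ ∀ w ∈ W, x * w = 0 := by
  simp [wedgeAnnihilator]

lemma wedgeAnnihilator_le (p : ℕ) (W : Submodule R (ExteriorAlgebra R M)) :
    wedgeAnnihilator p W ≤ ⋀[R]^p M :=
  inf_le_left

lemma map_exteriorPower_le (f : M →ₗ[R] N) (p : ℕ) :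
    (⋀[R]^p M).map (ExteriorAlgebra.map f).toLinearMap ≤ ⋀[R]^p N := by
  rw [ExteriorAlgebra.exteriorPower, Submodule.map_pow, ExteriorAlgebra.ι_range_map_map]
  exact pow_le_pow_left' LinearMap.map_le_range p

lemma map_wedgeAnnihilator_le {f : M →ₗ[R] N} {g : N →ₗ[R] M} (hfg : Function.LeftInverse f g)
    {W : Submodule R (ExteriorAlgebra R M)} {W' : Submodule R (ExteriorAlgebra R N)}
    (hg : W'.map (ExteriorAlgebra.map g).toLinearMap ≤ W) (p : ℕ) :
    (wedgeAnnihilator p W).map (ExteriorAlgebra.map f).toLinearMap ≤ wedgeAnnihilator p W' := by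
  rintro _ ⟨x, hx, rfl⟩
  obtain ⟨hxp, hxW⟩ := mem_wedgeAnnihilator.mp hx
  refine mem_wedgeAnnihilator.mpr
    ⟨map_exteriorPower_le f p (Submodule.mem_map_of_mem hxp), fun w hw => ?_⟩
  calc ExteriorAlgebra.map f x * w
      = ExteriorAlgebra.map f (x * ExteriorAlgebra.map g w) := by
        rw [map_mul, ExteriorAlgebra.leftInverse_map_iff.mpr hfg w]
    _ = 0 := by
        have hgw : ExteriorAlgebra.map g w ∈ W := hg (Submodule.mem_map_of_mem hw)
        rw [hxW _ hgw, map_zero]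

lemma exteriorPower_ne_bot [Nontrivial R] [Module.Free R M] [Module.Finite R M] {p : ℕ}
    (hp : p ≤ finrank R M) : ⋀[R]^p M ≠ ⊥ := by
  intro h
  have hrank : (finrank R M).choose p = 0 := by
    rw [← exteriorPower.finrank_eq, h, finrank_bot]
  exact (Nat.choose_pos hp).ne' hrank

section Basis

variable {I : Type*} [LinearOrder I] {p q : ℕ}

lemma basis_mem_exteriorPower (b : Basis I R M) (s : Set.powersetCard I p) :
    b.ExteriorAlgebra (s : Finset I) ∈ ⋀[R]^p M := by
  rw [ExteriorAlgebra.basis_eq_coe_basis]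
  exact Subtype.property _

lemma eq_zero_of_smul_basis_mul_basis_eq_zero (b : Basis I R M)
    {s : Set.powersetCard I p} {t : Set.powersetCard I q} (hst : Disjoint (s : Finset I) t) {c : R}
    (h : c • (b.ExteriorAlgebra (s : Finset I) * b.ExteriorAlgebra (t : Finset I)) = 0) :
    c = 0 := by
  rw [ExteriorAlgebra.basis_mul_of_disjoint b s t hst, smul_comm, smul_eq_zero_iff_eq] at h
  simpa using congrArg (b.ExteriorAlgebra.coord (Set.powersetCard.disjUnion hst)) h

variable [Fintype I]

lemma basis_compl_mul (b : Basis I R M) (hpq : p + q = Fintype.card I)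
    (t : Set.powersetCard I q) (w : ⋀[R]^q M) :
    b.ExteriorAlgebra (Set.powersetCard.compl hpq t : Finset I) * (w : ExteriorAlgebra R M) =
      (b.exteriorPower q).repr w t •
        (b.ExteriorAlgebra (Set.powersetCard.compl hpq t : Finset I) *
          b.ExteriorAlgebra (t : Finset I)) := by
  have hw : (w : ExteriorAlgebra R M) =
      ∑ u, (b.exteriorPower q).repr w u • b.ExteriorAlgebra (u : Finset I) := by
    simpa only [Submodule.coe_sum, Submodule.coe_smul, ← ExteriorAlgebra.basis_eq_coe_basis]
      using (congrArg Subtype.val ((b.exteriorPower q).sum_repr w)).symm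
  conv_lhs => rw [hw, Finset.mul_sum]
  simp only [mul_smul_comm]
  refine Fintype.sum_eq_single t fun u hut => ?_
  rw [ExteriorAlgebra.basis_mul_of_not_disjoint, smul_zero]
  intro hdisj
  have hut' : (u : Finset I) ⊆ t := disjoint_compl_left_iff.mp hdisj
  exact hut (Subtype.ext (Finset.eq_of_subset_of_card_le hut' (t.2.trans u.2.symm).le))

lemma eq_zero_of_forall_exteriorPower_mul_eq_zero (b : Basis I R M)
    (hpq : p + q = Fintype.card I) {w : ExteriorAlgebra R M} (hw : w ∈ ⋀[R]^q M)
    (h : ∀ x ∈ ⋀[R]^p M, x * w = 0) : w = 0 := by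
  lift w to ⋀[R]^q M using hw
  have hrepr : (b.exteriorPower q).repr w = 0 := by
    ext t
    have hmul := h _ (basis_mem_exteriorPower b (Set.powersetCard.compl hpq t))
    rw [basis_compl_mul] at hmul
    exact eq_zero_of_smul_basis_mul_basis_eq_zero b disjoint_compl_left hmul
  rw [(b.exteriorPower q).repr.map_eq_zero_iff.mp hrepr, Submodule.coe_zero]

end Basis

end CommRing

lemma finrank_le_of_separatingLeft {E F L : Type*} [AddCommGroup E] [Module k E]
    [AddCommGroup F] [Module k F] [FiniteDimensional k F] [AddCommGroup L] [Module k L]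
    {B : E →ₗ[k] F →ₗ[k] L} (hB : B.SeparatingLeft) (hL : finrank k L = 1) :
    finrank k E ≤ finrank k F := by
  have : FiniteDimensional k L := FiniteDimensional.of_finrank_eq_succ hL
  have hinj : Function.Injective B :=
    LinearMap.ker_eq_bot.mp (LinearMap.separatingLeft_iff_ker_eq_bot.mp hB)
  calc finrank k E ≤ finrank k (F →ₗ[k] L) := LinearMap.finrank_le_finrank_of_injective hinj
    _ = finrank k F := by rw [finrank_linearMap, hL, mul_one]

section Complementary

variable [FiniteDimensional k V] {p q : ℕ}

lemma eq_bot_of_wedgeAnnihilator_eq_exteriorPower (hpq : p + q = finrank k V)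
    {W : Submodule k (ExteriorAlgebra k V)} (hW : W ≤ ⋀[k]^q V)
    (h : wedgeAnnihilator p W = ⋀[k]^p V) : W = ⊥ := by
  refine (Submodule.eq_bot_iff W).mpr fun w hw => ?_
  refine eq_zero_of_forall_exteriorPower_mul_eq_zero (finBasis k V)
    (hpq.trans (Fintype.card_fin _).symm) (hW hw) fun x hx => ?_
  exact (mem_wedgeAnnihilator.mp (h.ge hx)).2 w hw

lemma eq_exteriorPower_of_wedgeAnnihilator_eq_bot (hpq : p + q = finrank k V)
    {W : Submodule k (ExteriorAlgebra k V)} (hW : W ≤ ⋀[k]^q V)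
    (h : wedgeAnnihilator p W = ⊥) : W = ⋀[k]^q V := by
  have : FiniteDimensional k W := Submodule.finiteDimensional_of_le hW
  let wedge : ⋀[k]^p V →ₗ[k] W →ₗ[k] ⋀[k]^(p + q) V :=
    (DirectSum.gMulLHom k fun i => ⋀[k]^i V).compl₂ (Submodule.inclusion hW)
  have hwedge : wedge.SeparatingLeft := fun x hx => by
    have hxW : (x : ExteriorAlgebra k V) ∈ wedgeAnnihilator p W :=
      mem_wedgeAnnihilator.mpr ⟨x.2, fun w hw => congrArg Subtype.val (hx ⟨w, hw⟩)⟩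
    rw [h] at hxW
    exact Subtype.ext hxW
  have hline : finrank k (⋀[k]^(p + q) V) = 1 := by
    rw [exteriorPower.finrank_eq, hpq, Nat.choose_self]
  refine Submodule.eq_of_le_of_finrank_le hW ?_
  calc finrank k (⋀[k]^q V)
      = finrank k (⋀[k]^p V) := by
        rw [exteriorPower.finrank_eq, exteriorPower.finrank_eq, Nat.choose_symm_of_eq_add hpq.symm]
    _ ≤ finrank k W := finrank_le_of_separatingLeft hwedge hline

lemma IsMDense.of_add_eq_finrank {ρ : Representation k G V} (hp : IsMDense ρ p)
    (hpq : p + q = finrank k V) : IsMDense ρ q := by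
  refine ⟨exteriorPower_ne_bot (by omega), fun W hW hinv => ?_⟩
  have hann : ∀ g : G, (wedgeAnnihilator p W).map (ExteriorAlgebra.map (ρ g)).toLinearMap ≤
      wedgeAnnihilator p W :=
    fun g => map_wedgeAnnihilator_le (ρ.self_inv_apply g) (hinv g⁻¹) p
  rcases hp.2 _ (wedgeAnnihilator_le p W) hann with hbot | htop
  · exact Or.inr (eq_exteriorPower_of_wedgeAnnihilator_eq_bot hpq hW hbot)
  · exact Or.inl (eq_bot_of_wedgeAnnihilator_eq_exteriorPower hpq hW htop)

end Complementary

/-- Let `V` be an `n`-dimensional representation of a group `G` over a field `k`, and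
`0 < m < n`. Then `V` is `m`-dense iff `V` is `(n-m)`-dense. -/
theorem mDense_iff_mDense_complement [FiniteDimensional k V] (ρ : Representation k G V)
    (n m : ℕ) (hn : finrank k V = n) (h0 : 0 < m) (hm : m < n) :
    IsMDense ρ m ↔ IsMDense ρ (n - m) :=
  ⟨fun h => h.of_add_eq_finrank (by omega), fun h => h.of_add_eq_finrank (by omega)⟩
end

section
/- Let V be a finite-dimensional representation of a group G over a field k and let m be an integer with 0 < m < dim V. If V is m-thick then V is 1-thick. -/
/-!
An `m`-thick representation with `0 < m < dim V` is irreducible. Given an invariant subspace `W`,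
choose `V₁` and `V₂` of dimensions `m` and `dim V - m`, each comparable with `W` for inclusion. By
invariance, every translate of `V₁` stands in the same relation to `W` as `V₁` does, so that the
complementary pair provided by thickness consists of two nonzero subspaces comparable with `W`. If
`W` lay between them, the smaller one would be contained in the larger; hence both contain `W`, or
both lie in `W`, which means `W = 0` or `W = V`.

An irreducible representation is `1`-thick: the translates of a line span `V`, so that one of them
is not contained in a given hyperplane.
-/

open Module

variable {k G V : Type*} [Field k] [Group G] [AddCommGroup V] [Module k V]

section Subspaces

lemma exists_le_finrank_eq {R M : Type*} [Semiring R] [StrongRankCondition R] [AddCommMonoid M]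
    [Module R M] (W : Submodule R M) {d : ℕ} (hd : d ≤ finrank R W) :
    ∃ U ≤ W, finrank R U = d := by
  have : Nontrivial R := nontrivial_of_invariantBasisNumber R
  obtain ⟨b, hb⟩ := exists_linearIndependent_of_le_finrank hd
  refine ⟨(Submodule.span R (Set.range b)).map W.subtype, Submodule.map_subtype_le _ _, ?_⟩
  rw [Submodule.finrank_map_subtype_eq, finrank_span_eq_card hb, Fintype.card_fin]

variable {K E : Type*} [DivisionRing K] [AddCommGroup E] [Module K E] [FiniteDimensional K E]

lemma exists_ge_finrank_eq (W : Submodule K E) {d : ℕ} (hWd : finrank K W ≤ d)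
    (hd : d ≤ finrank K E) : ∃ U ≥ W, finrank K U = d := by
  obtain ⟨C, hWC⟩ := W.exists_isCompl
  have hC : finrank K W + finrank K C = finrank K E := Submodule.finrank_add_eq_of_isCompl hWC
  obtain ⟨U, hUC, hU⟩ := exists_le_finrank_eq C (d := d - finrank K W) (by lia)
  refine ⟨W ⊔ U, le_sup_left, ?_⟩
  have hsum := Submodule.finrank_sup_add_finrank_inf_eq W U
  rw [(hWC.disjoint.mono_right hUC).eq_bot, finrank_bot] at hsum
  lia

lemma exists_finrank_eq_and_le_or_ge (W : Submodule K E) {d : ℕ} (hd : d ≤ finrank K E) :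
    ∃ U : Submodule K E, finrank K U = d ∧ (U ≤ W ∨ W ≤ U) := by
  rcases le_total d (finrank K W) with hdW | hWd
  · obtain ⟨U, hUW, hU⟩ := exists_le_finrank_eq W hdW
    exact ⟨U, hU, .inl hUW⟩
  · obtain ⟨U, hWU, hU⟩ := exists_ge_finrank_eq W hWd hd
    exact ⟨U, hU, .inr hWU⟩

end Subspaces

lemma eq_bot_or_eq_top_of_isCompl_of_le_or_ge {α : Type*} [PartialOrder α] [BoundedOrder α]
    {a b w : α} (hab : IsCompl a b) (ha : a ≠ ⊥) (hb : b ≠ ⊥) (haw : a ≤ w ∨ w ≤ a)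
    (hbw : b ≤ w ∨ w ≤ b) : w = ⊥ ∨ w = ⊤ := by
  rcases haw with haw | hwa <;> rcases hbw with hbw | hwb
  · exact .inr (top_le_iff.mp (hab.codisjoint haw hbw))
  · exact absurd (hab.disjoint.eq_bot_of_le (haw.trans hwb)) ha
  · exact absurd (hab.disjoint.symm.eq_bot_of_le (hbw.trans hwa)) hb
  · exact .inl (le_bot_iff.mp (hab.disjoint hwa hwb))

section Translates

variable {R M : Type*} [Semiring R] [AddCommMonoid M] [Module R M]

lemma map_iSup_map_representation_le {S : Type*} [Monoid S] (ρ : Representation R S M)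
    (L : Submodule R M) (s : S) :
    (⨆ t, L.map (ρ t)).map (ρ s) ≤ ⨆ t, L.map (ρ t) := by
  rw [Submodule.map_iSup]
  refine iSup_le fun t ↦ ?_
  rw [← Submodule.map_comp, ← Module.End.mul_eq_comp, ← map_mul]
  exact le_iSup (fun t ↦ L.map (ρ t)) (s * t)

lemma le_iSup_map_representation {S : Type*} [Monoid S] (ρ : Representation R S M)
    (L : Submodule R M) : L ≤ ⨆ t, L.map (ρ t) :=
  le_iSup_of_le 1 (by rw [map_one, Module.End.one_eq_id, Submodule.map_id])

variable (ρ : Representation R G M)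

lemma le_map_representation_of_forall_map_le {W : Submodule R M} (hW : ∀ g, W.map (ρ g) ≤ W)
    (g : G) : W ≤ W.map (ρ g) := fun w hw ↦
  ⟨ρ g⁻¹ w, hW g⁻¹ (Submodule.mem_map_of_mem hw), ρ.self_inv_apply g w⟩

lemma finrank_map_representation (g : G) (U : Submodule R M) :
    finrank R (U.map (ρ g)) = finrank R U :=
  (Submodule.equivMapOfInjective (ρ g) (ρ.apply_bijective g).injective U).finrank_eq.symm

end Translates

variable {ρ : Representation k G V}

theorem IsMThick.repIrreducible {m : ℕ} (h : IsMThick ρ m) (h0 : 0 < m) (hm : m < finrank k V) :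
    RepIrreducible ρ := by
  have : FiniteDimensional k V := .of_finrank_pos (h0.trans hm)
  have : Nontrivial V := nontrivial_of_finrank_pos (h0.trans hm)
  refine ⟨exists_ne 0, fun W hW ↦ ?_⟩
  obtain ⟨V₁, hV₁, hV₁W⟩ := exists_finrank_eq_and_le_or_ge W hm.le
  obtain ⟨V₂, hV₂, hV₂W⟩ := exists_finrank_eq_and_le_or_ge W (Nat.sub_le (finrank k V) m)
  obtain ⟨g, hg⟩ := h V₁ V₂ hV₁ hV₂
  have hgV₁W : V₁.map (ρ g) ≤ W ∨ W ≤ V₁.map (ρ g) :=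
    hV₁W.imp (fun hle ↦ (Submodule.map_mono hle).trans (hW g))
      fun hle ↦ (le_map_representation_of_forall_map_le ρ hW g).trans (Submodule.map_mono hle)
  have hgV₁ : V₁.map (ρ g) ≠ ⊥ := by
    rw [← Submodule.one_le_finrank_iff, finrank_map_representation, hV₁]
    exact h0
  have hV₂_ne : V₂ ≠ ⊥ := by
    rw [← Submodule.one_le_finrank_iff, hV₂]
    exact Nat.sub_pos_of_lt hm
  exact eq_bot_or_eq_top_of_isCompl_of_le_or_ge hg hgV₁ hV₂_ne hgV₁W hV₂W

namespace RepIrreducible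

lemma iSup_map_eq_top (h : RepIrreducible ρ) {L : Submodule k V} (hL : L ≠ ⊥) :
    ⨆ g, L.map (ρ g) = ⊤ :=
  (h.2 _ (map_iSup_map_representation_le ρ L)).resolve_left
    (ne_bot_of_le_ne_bot hL (le_iSup_map_representation ρ L))

lemma exists_not_map_le (h : RepIrreducible ρ) {L H : Submodule k V} (hL : L ≠ ⊥) (hH : H ≠ ⊤) :
    ∃ g, ¬ L.map (ρ g) ≤ H := by
  by_contra! hle
  exact hH (top_le_iff.mp (h.iSup_map_eq_top hL ▸ iSup_le hle))

theorem isMThick_one [FiniteDimensional k V] (h : RepIrreducible ρ) : IsMThick ρ 1 := by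
  intro L H hL hH
  have hL_ne : L ≠ ⊥ := (Submodule.isAtom_iff_finrank_eq_one.mpr hL).1
  have hV : 1 ≤ finrank k V := hL ▸ L.finrank_le
  have hH_ne : H ≠ ⊤ := by
    rintro rfl
    rw [finrank_top] at hH
    lia
  obtain ⟨g, hg⟩ := h.exists_not_map_le hL_ne hH_ne
  have hgL : finrank k (L.map (ρ g)) = 1 := (finrank_map_representation ρ g L).trans hL
  refine ⟨g, (Submodule.isCompl_iff_disjoint _ _ (by lia)).mpr ?_⟩
  exact (Submodule.isAtom_iff_finrank_eq_one.mpr hgL).not_le_iff_disjoint.mp hg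

end RepIrreducible

/-- If a finite-dimensional representation `V` is `m`-thick for some `0 < m < dim V`,
then it is `1`-thick. -/
theorem mThick_implies_oneThick [FiniteDimensional k V] (ρ : Representation k G V)
    (m : ℕ) (h0 : 0 < m) (hm : m < finrank k V) (h : IsMThick ρ m) :
    IsMThick ρ 1 :=
  (h.repIrreducible h0 hm).isMThick_one
end

section
/- For n ≥ 2, the standard representation of the special orthogonal group SO_{2n}(ℂ) on ℂ^{2n} is not n-thick. -/
/-!
Let `L` be a totally isotropic subspace for a nondegenerate symmetric form `B`, and let `g` be an
orthogonal map such that `V = L ⊕ g L`. In a basis `l₁, …, lₙ, g l₁, …, g lₙ` the matrices of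
`B(x, y)` and `B(x, g y)` are `(0 P; Pᵀ 0)` and `(P *; 0 P)` with `P = (B(lᵢ, g lⱼ))`, so comparing
determinants gives `det g = (-1)ⁿ`. Hence, if `r` is orthogonal with `det r = (-1)ⁿ⁺¹`, then `g L`
and `r L` cannot be complementary for `det g = 1`: otherwise `g r⁻¹` would move `r L` to a
complement of itself and yet have determinant `(-1)ⁿ⁺¹`.
-/

open Module Matrix

section BlockDeterminant

variable {κ R : Type*} [Fintype κ] [DecidableEq κ] [CommRing R]

lemma det_fromBlocks_zero₁₁_zero₂₂ (P Q : Matrix κ κ R) :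
    (fromBlocks 0 P Q 0).det = (-1) ^ Fintype.card κ * (P.det * Q.det) := by
  have hswap : (fromBlocks 0 1 1 0 : Matrix (κ ⊕ κ) (κ ⊕ κ) R).det = (-1) ^ Fintype.card κ := by
    have h : (fromBlocks 0 1 1 0 * fromBlocks 1 1 0 1 : Matrix (κ ⊕ κ) (κ ⊕ κ) R) =
        fromBlocks 0 1 1 1 := by
      simp [fromBlocks_multiply]
    simpa [det_neg] using congrArg det h
  have hfactor : fromBlocks 0 P Q 0 = fromBlocks 0 1 1 0 * fromBlocks Q 0 0 P := by
    simp [fromBlocks_multiply]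
  rw [hfactor, det_mul, hswap, det_fromBlocks_zero₂₁, mul_comm Q.det]

end BlockDeterminant

section SymmetricBilinearForm

section

variable {R M : Type*} [CommRing R] [AddCommGroup M] [Module R M] {B : LinearMap.BilinForm R M}

lemma injective_of_isOrthogonal (hnd : B.Nondegenerate) {g : M →ₗ[R] M} (hg : B.IsOrthogonal g) :
    Function.Injective g :=
  (injective_iff_map_eq_zero g).mpr fun x hx ↦
    hnd.1 x fun y ↦ by rw [← hg x y, hx, map_zero, LinearMap.zero_apply]

lemma det_eq_neg_one_pow_of_basis [IsDomain R] {κ : Type*} [Fintype κ] (hB : B.IsSymm)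
    (hnd : B.Nondegenerate) {g : M →ₗ[R] M} (hg : B.IsOrthogonal g) (b : Basis (κ ⊕ κ) R M)
    (hiso : ∀ i j, B (b (Sum.inl i)) (b (Sum.inl j)) = 0)
    (hbg : ∀ i, b (Sum.inr i) = g (b (Sum.inl i))) :
    LinearMap.det g = (-1) ^ Fintype.card κ := by
  classical
  let P := Matrix.of fun i j ↦ B (b (Sum.inl i)) (g (b (Sum.inl j)))
  let Q := Matrix.of fun i j ↦ B (b (Sum.inl i)) (g (g (b (Sum.inl j))))
  have hgram : LinearMap.BilinForm.toMatrix b B = fromBlocks 0 P Pᵀ 0 := by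
    ext (i | i) (j | j) <;>
      simp [LinearMap.BilinForm.toMatrix_apply, hbg, hiso, hg _ _, P, hB.eq (b (Sum.inl j)) _]
  have hgram_g : LinearMap.BilinForm.toMatrix b (B.compRight g) = fromBlocks P Q 0 P := by
    ext (i | i) (j | j) <;>
      simp [LinearMap.BilinForm.toMatrix_apply, hbg, hiso, hg _ _, P, Q]
  have hgram_det : (LinearMap.BilinForm.toMatrix b B).det =
      (-1) ^ Fintype.card κ * (P.det * P.det) := by
    rw [hgram, det_fromBlocks_zero₁₁_zero₂₂, det_transpose]
  have hP : P.det * P.det ≠ 0 := right_ne_zero_of_mul <|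
    hgram_det ▸ (LinearMap.BilinForm.nondegenerate_iff_det_ne_zero b).mp hnd
  have hsign : ((-1) ^ Fintype.card κ * (-1) ^ Fintype.card κ : R) = 1 := by simp [← mul_pow]
  refine mul_right_cancel₀ hP ?_
  calc LinearMap.det g * (P.det * P.det)
      = (-1) ^ Fintype.card κ * ((LinearMap.BilinForm.toMatrix b B).det * LinearMap.det g) := by
        rw [hgram_det]
        linear_combination (-LinearMap.det g * (P.det * P.det)) * hsign
    _ = (-1) ^ Fintype.card κ * (P.det * P.det) := by
        rw [← LinearMap.det_toMatrix b, ← det_mul, ← LinearMap.BilinForm.toMatrix_compRight,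
          hgram_g, det_fromBlocks_zero₂₁]

end

variable {K V : Type*} [Field K] [AddCommGroup V] [Module K V] [FiniteDimensional K V]
  {B : LinearMap.BilinForm K V} {L : Submodule K V}

lemma det_eq_neg_one_pow_of_isCompl_map (hB : B.IsSymm) (hnd : B.Nondegenerate)
    (hL : L ≤ B.orthogonal L) {g : V →ₗ[K] V} (hg : B.IsOrthogonal g) (hc : IsCompl L (L.map g)) :
    LinearMap.det g = (-1) ^ finrank K L := by
  let l := finBasis K L
  let e := L.equivMapOfInjective g (injective_of_isOrthogonal hnd hg)
  let b := (l.prod (l.map e)).map (L.prodEquivOfIsCompl _ hc)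
  have hb_inl (i) : b (Sum.inl i) = l i := by simp [b]
  have hb_inr (i) : b (Sum.inr i) = g (l i) := by simp [b, e]
  have hiso (i j) : B (b (Sum.inl i)) (b (Sum.inl j)) = 0 := by
    rw [hb_inl, hb_inl]
    exact hL (l j).2 _ (l i).2
  rw [det_eq_neg_one_pow_of_basis hB hnd hg b hiso fun i ↦ by rw [hb_inr, hb_inl],
    Fintype.card_fin]

lemma det_eq_neg_one_pow_mul_det_of_isCompl_map_map (hB : B.IsSymm) (hnd : B.Nondegenerate)
    (hL : L ≤ B.orthogonal L) {r : V ≃ₗ[K] V} {g : V →ₗ[K] V} (hr : B.IsOrthogonal r)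
    (hg : B.IsOrthogonal g) (hc : IsCompl (L.map (r : V →ₗ[K] V)) (L.map g)) :
    LinearMap.det g = (-1) ^ finrank K L * LinearMap.det (r : V →ₗ[K] V) := by
  have hrL : L.map (r : V →ₗ[K] V) ≤ B.orthogonal (L.map (r : V →ₗ[K] V)) := by
    rintro _ ⟨x, hx, rfl⟩ _ ⟨y, hy, rfl⟩
    exact (hr y x).trans (hL hx y hy)
  let a : V →ₗ[K] V := g ∘ₗ r.symm
  have ha : B.IsOrthogonal a := fun x y ↦ by
    simpa [a] using (hg _ _).trans (hr (r.symm x) (r.symm y)).symm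
  have har : a ∘ₗ r = g := by ext; simp [a]
  have hdet : LinearMap.det a = (-1) ^ finrank K (L.map (r : V →ₗ[K] V)) :=
    det_eq_neg_one_pow_of_isCompl_map hB hnd hrL ha (by rwa [← Submodule.map_comp, har])
  rw [← har, LinearMap.det_comp, hdet, r.finrank_map_eq]

lemma exists_isOrthogonal_det_eq_neg_one [Nontrivial V] (h2 : (2 : K) ≠ 0) (hB : B.IsSymm)
    (hnd : B.Nondegenerate) :
    ∃ r : V ≃ₗ[K] V, B.IsOrthogonal r ∧ LinearMap.det (r : V →ₗ[K] V) = -1 := by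
  have := invertibleOfNonzero h2
  obtain ⟨x, hx⟩ := LinearMap.BilinForm.exists_bilinForm_self_ne_zero hnd.ne_zero
    (LinearMap.BilinForm.isSymm_iff.mp hB)
  let f : Dual K V := (2 / B x x) • B x
  have hf : f x = 2 := by simp [f, hx]
  refine ⟨reflection hf, fun y z ↦ ?_, ?_⟩
  · simp only [reflection_apply, f, map_sub, map_smul, LinearMap.sub_apply, LinearMap.smul_apply,
      smul_eq_mul, hB.eq x y]
    field_simp
    ring
  · have h : (reflection hf : V →ₗ[K] V) = LinearMap.transvection f (-x) := by
      ext y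
      simp [reflection_apply, LinearMap.transvection.apply, sub_eq_add_neg]
    rw [h, LinearMap.transvection.det, map_neg, hf]
    norm_num

lemma exists_isOrthogonal_det_eq_neg_one_pow [Nontrivial V] (h2 : (2 : K) ≠ 0) (hB : B.IsSymm)
    (hnd : B.Nondegenerate) (k : ℕ) :
    ∃ r : V ≃ₗ[K] V, B.IsOrthogonal r ∧ LinearMap.det (r : V →ₗ[K] V) = (-1) ^ k := by
  rcases k.even_or_odd with hk | hk
  · exact ⟨.refl K V, fun _ _ ↦ rfl, by simp [hk.neg_one_pow]⟩
  · simpa only [hk.neg_one_pow] using exists_isOrthogonal_det_eq_neg_one h2 hB hnd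

theorem exists_forall_not_isCompl_map [Nontrivial V] (h2 : (2 : K) ≠ 0) (hB : B.IsSymm)
    (hnd : B.Nondegenerate) (hL : L ≤ B.orthogonal L) :
    ∃ L' : Submodule K V, finrank K L' = finrank K L ∧
      ∀ g : V →ₗ[K] V, B.IsOrthogonal g → LinearMap.det g = 1 → ¬ IsCompl (L.map g) L' := by
  obtain ⟨r, hr, hrdet⟩ := exists_isOrthogonal_det_eq_neg_one_pow h2 hB hnd (finrank K L + 1)
  refine ⟨L.map (r : V →ₗ[K] V), r.finrank_map_eq L, fun g hg hgdet hc ↦ h2 ?_⟩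
  have hdet := det_eq_neg_one_pow_mul_det_of_isCompl_map_map hB hnd hL hr hg hc.symm
  have hodd : Odd (finrank K L + (finrank K L + 1)) := by grind
  rw [hgdet, hrdet, ← pow_add, hodd.neg_one_pow] at hdet
  linear_combination hdet

end SymmetricBilinearForm

section DotProduct

variable {R ι : Type*} [CommRing R] [Fintype ι]

lemma isSymm_dotProductBilin :
    LinearMap.BilinForm.IsSymm (dotProductBilin R R : LinearMap.BilinForm R (ι → R)) :=
  ⟨dotProduct_comm⟩

lemma nondegenerate_dotProductBilin :
    LinearMap.BilinForm.Nondegenerate (dotProductBilin R R : LinearMap.BilinForm R (ι → R)) :=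
  ⟨fun x hx ↦ dotProduct_eq_zero x hx,
    fun x hx ↦ dotProduct_eq_zero x fun y ↦ (dotProduct_comm x y).trans (hx y)⟩

lemma isOrthogonal_dotProductBilin_mulVecLin [DecidableEq ι] {A : Matrix ι ι R}
    (hA : Aᵀ * A = 1) :
    LinearMap.IsOrthogonal (dotProductBilin R R) A.mulVecLin := fun x y ↦ by
  simp only [dotProductBilin_apply_apply, mulVecLin_apply]
  rw [dotProduct_mulVec, ← mulVec_transpose, mulVec_mulVec, hA, one_mulVec]

lemma exists_le_orthogonal_dotProductBilin {κ : Type*} [Fintype κ] [Nontrivial R]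
    (h : IsSquare (-1 : R)) (e : ι ≃ κ ⊕ κ) :
    ∃ L : Submodule R (ι → R), finrank R L = Fintype.card κ ∧
      L ≤ LinearMap.BilinForm.orthogonal (dotProductBilin R R) L := by
  obtain ⟨i, hi⟩ := h
  let f : (κ → R) →ₗ[R] (ι → R) :=
    { toFun x := Sum.elim x (i • x) ∘ e
      map_add' x y := by ext k; cases hk : e k <;> simp [hk]
      map_smul' c x := by ext k; cases hk : e k <;> simp [hk, mul_left_comm] }
  have hf : Function.Injective f := fun x y hxy ↦ funext fun k ↦ by
    simpa [f] using congrFun hxy (e.symm (Sum.inl k))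
  refine ⟨LinearMap.range f, ?_, ?_⟩
  · rw [LinearMap.finrank_range_of_inj hf, finrank_fintype_fun_eq_card]
  · rintro _ ⟨x, rfl⟩ _ ⟨y, rfl⟩
    calc (Sum.elim y (i • y) ∘ e) ⬝ᵥ (Sum.elim x (i • x) ∘ e)
        = y ⬝ᵥ x + (i * i) • (y ⬝ᵥ x) := by
          rw [comp_equiv_dotProduct_comp_equiv, sumElim_dotProduct_sumElim, smul_dotProduct,
            dotProduct_smul, smul_smul]
      _ = 0 := by rw [← hi, neg_one_smul, add_neg_cancel]

end DotProduct

theorem soEvenC_standard_not_nThick_general {K : Type*} [Field K] (h2 : (2 : K) ≠ 0)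
    (hi : IsSquare (-1 : K)) {n : ℕ} (hn : n ≠ 0) :
    ¬ ∀ V₁ V₂ : Submodule K (Fin (2 * n) → K),
        finrank K V₁ = n → finrank K V₂ = 2 * n - n →
        ∃ A : Matrix (Fin (2 * n)) (Fin (2 * n)) K, Aᵀ * A = 1 ∧ A.det = 1 ∧
          IsCompl (V₁.map A.mulVecLin) V₂ := by
  intro hthick
  have : NeZero (2 * n) := ⟨by omega⟩
  obtain ⟨L, hL_rank, hL⟩ := exists_le_orthogonal_dotProductBilin hi
    ((finCongr (two_mul n)).trans finSumFinEquiv.symm)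
  obtain ⟨L', hL'_rank, hL'⟩ :=
    exists_forall_not_isCompl_map h2 isSymm_dotProductBilin nondegenerate_dotProductBilin hL
  rw [Fintype.card_fin] at hL_rank
  obtain ⟨A, hA, hA_det, hA_compl⟩ := hthick L L' hL_rank (by omega)
  exact hL' A.mulVecLin (isOrthogonal_dotProductBilin_mulVecLin hA)
    ((LinearMap.det_toLin' A).trans hA_det) hA_compl

/-- For `n ≥ 2`, the standard representation of `SO_{2n}(ℂ)` (complex matrices `A` with
`AᵀA = 1` and `det A = 1`) on `ℂ^{2n}` is not `n`-thick: it is not the case that for all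
subspaces `V₁, V₂` with `dim V₁ = n` and `dim V₂ = 2n - n` some element of `SO_{2n}(ℂ)`
moves `V₁` to a complement of `V₂`. -/
theorem soEvenC_standard_not_nThick (n : ℕ) (hn : 2 ≤ n) :
    ¬ ∀ V₁ V₂ : Submodule ℂ (Fin (2 * n) → ℂ),
        finrank ℂ V₁ = n → finrank ℂ V₂ = 2 * n - n →
        ∃ A : Matrix (Fin (2 * n)) (Fin (2 * n)) ℂ, Aᵀ * A = 1 ∧ A.det = 1 ∧
          IsCompl (V₁.map A.mulVecLin) V₂ :=
  soEvenC_standard_not_nThick_general two_ne_zero ⟨Complex.I, Complex.I_mul_I.symm⟩ (by omega)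
end

section
/- For n ≥ 1, the standard representation of the symplectic group Sp_{2n}(ℂ) on ℂ^{2n} is thick; that is, it is m-thick for every integer m with 0 < m < 2n. -/
open Module Matrix

/-!
Among the images `g V₁` under the isometries `g` of a symplectic form `ω`, choose one whose
intersection with `V₂` is minimal, and rename it `V₁`. Suppose some `u ≠ 0` lies in `V₁ ∩ V₂`. Then
`V₁ + V₂` is a proper subspace for dimension reasons, and so is the hyperplane `ω(·, u) = 0`. Since
two proper subspaces never cover a vector space, some `v ∉ V₁ + V₂` has `ω(v, u) ≠ 0`. The
transvection `x ↦ x + ω(v, x) v` can send a vector of `V₁` into `V₂` only by fixing it, so it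
replaces `V₁ ∩ V₂` by its intersection with the hyperplane `ω(v, ·) = 0`, which omits `u`. This
contradicts minimality.
-/

section Subspace

lemma exists_notMem_notMem_of_ne_top {R V : Type*} [Ring R] [AddCommGroup V] [Module R V]
    {p q : Submodule R V} (hp : p ≠ ⊤) (hq : q ≠ ⊤) : ∃ x, x ∉ p ∧ x ∉ q := by
  by_contra! h
  have hcover : ⊤ ≤ p ∨ ⊤ ≤ q :=
    AddSubgroupClass.subset_union.mp fun x _ => or_iff_not_imp_left.mpr (h x)
  exact hcover.elim (hp ∘ top_le_iff.mp) (hq ∘ top_le_iff.mp)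

variable {K V : Type*} [DivisionRing K] [AddCommGroup V] [Module K V] {p q : Submodule K V}

lemma disjoint_of_codisjoint_of_finrank_add_le [FiniteDimensional K V] (h : Codisjoint p q)
    (hdim : finrank K p + finrank K q ≤ finrank K V) : Disjoint p q := by
  have hsum := Submodule.finrank_sup_add_finrank_inf_eq p q
  rw [h.eq_top, finrank_top] at hsum
  exact disjoint_iff.mpr (Submodule.finrank_eq_zero.mp (by omega))

lemma map_transvection_inf_eq_inf_ker (f : Dual K V) {v : V} (hv : v ∉ p ⊔ q) :
    p.map (LinearMap.transvection f v) ⊓ q = p ⊓ q ⊓ LinearMap.ker f := by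
  have eq_zero_of_mem {x : V} (hx : x ∈ p) (hxq : x + f x • v ∈ q) : f x = 0 := by
    by_contra hfx
    refine hv ((Submodule.smul_mem_iff _ hfx).mp ?_)
    simpa using sub_mem (Submodule.mem_sup_right hxq) (Submodule.mem_sup_left hx)
  have fixed {x : V} (hfx : f x = 0) : LinearMap.transvection f v x = x := by
    rw [LinearMap.transvection.apply, hfx, zero_smul, add_zero]
  ext y
  constructor
  · rintro ⟨⟨x, hx, rfl⟩, hxq⟩
    have hfx : f x = 0 := eq_zero_of_mem hx hxq
    rw [fixed hfx] at hxq ⊢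
    exact ⟨⟨hx, hxq⟩, hfx⟩
  · rintro ⟨⟨hyp, hyq⟩, hfy⟩
    exact ⟨⟨y, hyp, fixed hfy⟩, hyq⟩

end Subspace

section SymplecticForm

/-- The symplectic transvection `x ↦ x + ω(v, x) v` along `v`, as an isometry of the alternating
form `ω`. -/
def symplecticTransvection {R V : Type*} [CommRing R] [AddCommGroup V] [Module R V]
    {ω : LinearMap.BilinForm R V} (hω : ω.IsAlt) (v : V) : ω.IsometryEquiv ω where
  toLinearEquiv := LinearEquiv.transvection (hω.self_eq_zero v)
  map_app' x y := by
    simp [LinearMap.transvection.apply, hω.self_eq_zero v, ← hω.neg_eq v x, mul_comm]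

variable {K V : Type*} [Field K] [AddCommGroup V] [Module K V] {ω : LinearMap.BilinForm K V}

lemma exists_isometryEquiv_map_inf_lt (hω : ω.IsAlt) (hsep : ω.SeparatingRight)
    {p q : Submodule K V} (hdisj : ¬Disjoint p q) (hcodisj : ¬Codisjoint p q) :
    ∃ τ : ω.IsometryEquiv ω, p.map τ.toLinearMap ⊓ q < p ⊓ q := by
  obtain ⟨u, hu, hu0⟩ := Submodule.exists_mem_ne_zero_of_ne_bot (disjoint_iff.not.mp hdisj)
  have hker : LinearMap.ker (ω.flip u) ≠ ⊤ := fun h =>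
    hu0 (hsep u (LinearMap.congr_fun (LinearMap.ker_eq_top.mp h)))
  obtain ⟨v, hv, hvu⟩ := exists_notMem_notMem_of_ne_top (codisjoint_iff.not.mp hcodisj) hker
  have hinf : p.map (symplecticTransvection hω v).toLinearMap ⊓ q =
      p ⊓ q ⊓ LinearMap.ker (ω v) := map_transvection_inf_eq_inf_ker (ω v) hv
  refine ⟨symplecticTransvection hω v, ?_⟩
  rw [hinf, inf_lt_left]
  exact fun hle => hvu (hle hu)

variable [FiniteDimensional K V]

theorem exists_isometryEquiv_disjoint_map (hω : ω.IsAlt) (hnondeg : ω.Nondegenerate)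
    {p q : Submodule K V} (hdim : finrank K p + finrank K q ≤ finrank K V) :
    ∃ g : ω.IsometryEquiv ω, Disjoint (p.map g.toLinearMap) q := by
  let inter (g : ω.IsometryEquiv ω) : Submodule K V := p.map g.toLinearMap ⊓ q
  have : Nonempty (ω.IsometryEquiv ω) := ⟨.refl ω⟩
  let g := Function.argmin inter
  refine ⟨g, ?_⟩
  by_contra hdisj
  have hcodisj : ¬Codisjoint (p.map g.toLinearMap) q := fun h =>
    hdisj (disjoint_of_codisjoint_of_finrank_add_le h (by rwa [LinearEquiv.finrank_map_eq]))
  obtain ⟨τ, hτ⟩ := exists_isometryEquiv_map_inf_lt hω hnondeg.2 hdisj hcodisj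
  rw [← Submodule.map_comp] at hτ
  exact Function.not_lt_argmin inter (g.trans τ) hτ

theorem exists_isometryEquiv_isCompl_map (hω : ω.IsAlt) (hnondeg : ω.Nondegenerate)
    {p q : Submodule K V} (hdim : finrank K p + finrank K q = finrank K V) :
    ∃ g : ω.IsometryEquiv ω, IsCompl (p.map g.toLinearMap) q := by
  obtain ⟨g, hg⟩ := exists_isometryEquiv_disjoint_map hω hnondeg hdim.le
  refine ⟨g, (Submodule.isCompl_iff_disjoint _ _ ?_).mpr hg⟩
  rw [LinearEquiv.finrank_map_eq, hdim]

end SymplecticForm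

section SymplecticMatrix

variable {R : Type*} [CommRing R]

lemma transpose_toMatrix'_mul_mul_toMatrix' {m n : Type*} [Fintype m] [DecidableEq m] [Fintype n]
    [DecidableEq n] {M : Matrix m m R} {N : Matrix n n R} (g : M.toBilin' →bᵢ N.toBilin') :
    (LinearMap.toMatrix' g.toLinearMap)ᵀ * N * LinearMap.toMatrix' g.toLinearMap = M := by
  apply Matrix.toBilin'.injective
  rw [← Matrix.toBilin'_comp, toLin'_toMatrix']
  exact LinearMap.ext₂ g.map_app

variable {l : Type*} [Fintype l] [DecidableEq l]

lemma isAlt_toBilin'_J : (J l R).toBilin'.IsAlt := by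
  intro x
  simp [J, Matrix.toBilin'_apply', fromBlocks_mulVec, Fintype.sum_sum_type, dotProduct, mul_comm,
    neg_mulVec]

lemma toMatrix'_mem_symplecticGroup (g : (J l R).toBilin'.IsometryEquiv (J l R).toBilin') :
    LinearMap.toMatrix' g.toLinearMap ∈ symplecticGroup l R :=
  SymplecticGroup.mem_iff'.mpr (transpose_toMatrix'_mul_mul_toMatrix' g.toIsometry)

end SymplecticMatrix

theorem spC_standard_thick_general {l K : Type*} [Fintype l] [DecidableEq l] [Field K]
    (V₁ V₂ : Submodule K (l ⊕ l → K))
    (hdim : finrank K V₁ + finrank K V₂ = 2 * Fintype.card l) :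
    ∃ A ∈ symplecticGroup l K, IsCompl (V₁.map A.mulVecLin) V₂ := by
  have hnondeg : (J l K).toBilin'.Nondegenerate :=
    LinearMap.BilinForm.nondegenerate_toBilin'_of_det_ne_zero' _ (isUnit_det_J l K).ne_zero
  have hcard : finrank K (l ⊕ l → K) = 2 * Fintype.card l := by simp [two_mul]
  obtain ⟨g, hg⟩ :=
    exists_isometryEquiv_isCompl_map isAlt_toBilin'_J hnondeg (hdim.trans hcard.symm)
  refine ⟨LinearMap.toMatrix' g.toLinearMap, toMatrix'_mem_symplecticGroup g, ?_⟩
  rwa [← toLin'_apply', toLin'_toMatrix']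

/-- For `n ≥ 1`, the standard representation of the symplectic group `Sp_{2n}(ℂ)`
(matrices `A` with `AᵀJA = J` where `J = [[0, -I_n], [I_n, 0]]`) on `ℂ^{2n}` is thick:
for every `0 < m < 2n` and all subspaces `V₁, V₂` with `dim V₁ = m`, `dim V₂ = 2n - m`,
some symplectic matrix moves `V₁` to a complement of `V₂`. -/
theorem spC_standard_thick (n : ℕ) (hn : 1 ≤ n) (m : ℕ) (h0 : 0 < m) (hm : m < 2 * n)
    (V₁ V₂ : Submodule ℂ (Fin n ⊕ Fin n → ℂ))
    (h₁ : finrank ℂ V₁ = m) (h₂ : finrank ℂ V₂ = 2 * n - m) :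
    ∃ A : Matrix (Fin n ⊕ Fin n) (Fin n ⊕ Fin n) ℂ,
      Aᵀ * Matrix.fromBlocks 0 (-1) 1 0 * A = Matrix.fromBlocks 0 (-1) 1 0 ∧
      IsCompl (V₁.map A.mulVecLin) V₂ := by
  obtain ⟨A, hA, hcompl⟩ := spC_standard_thick_general V₁ V₂ (by rw [Fintype.card_fin]; omega)
  exact ⟨A, SymplecticGroup.mem_iff'.mp hA, hcompl⟩
end

section
/- For n ≥ 2, the standard representation of the symplectic group Sp_{2n}(ℂ) on ℂ^{2n} is not m-dense for any integer m with 1 < m < 2n−1; that is, the induced representation of Sp_{2n}(ℂ) on ⋀^m ℂ^{2n} is not irreducible for each such m. -/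
open Module Matrix

/-!
Let `eᵢ, fᵢ` (`1 ≤ i ≤ n`) be the symplectic basis of `V = R^{2n}` and `ω = ∑ᵢ eᵢ ∧ fᵢ`. Every
symplectic matrix fixes `ω`, so `x ↦ ω ∧ x` is an equivariant map `⋀ᵏ V → ⋀ᵏ⁺² V`, and it is
nonzero whenever `k + 2 ≤ 2n`.

* If `m ≤ n`, the image of `⋀ᵐ⁻² V` in `⋀ᵐ V` is invariant and nonzero. It does not contain
  `e₁ ∧ ⋯ ∧ eₘ`, because the projection of `V` killing every `fᵢ` kills `ω` but fixes this element.
* If `m ≥ n`, the kernel of `ω ∧ ·` on `⋀ᵐ V` is invariant and proper. It contains every monomial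
  divisible by `e₁ ∧ ⋯ ∧ eₙ`.
-/

namespace SymplecticExterior

open ExteriorAlgebra

lemma exists_injective_fin_range_eq {α : Type*} {T : Finset α} {k : ℕ} (hT : T.card = k) :
    ∃ s : Fin k → α, s.Injective ∧ Set.range s = T :=
  ⟨(↑) ∘ (T.equivFinOfCardEq hT).symm, Subtype.val_injective.comp (Equiv.injective _), by simp⟩

section ExteriorPower

variable {R M N : Type*} [CommRing R] [AddCommGroup M] [Module R M] [AddCommGroup N] [Module R N]

lemma map_mem_exteriorPower (f : M →ₗ[R] N) {k : ℕ} {x : ExteriorAlgebra R M}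
    (hx : x ∈ ⋀[R]^k M) : map f x ∈ ⋀[R]^k N := by
  have hle : (⋀[R]^k M).map (map f).toLinearMap ≤ ⋀[R]^k N := by
    rw [exteriorPower, Submodule.map_pow, ι_range_map_map]
    exact pow_le_pow_left' (LinearMap.map_le_range ..) k
  exact hle ⟨x, hx, rfl⟩

lemma map_map_mulLeft_exteriorPower_le {f : M →ₗ[R] M} {w : ExteriorAlgebra R M}
    (hw : map f w = w) (k : ℕ) :
    ((⋀[R]^k M).map (LinearMap.mulLeft R w)).map (map f).toLinearMap ≤
      (⋀[R]^k M).map (LinearMap.mulLeft R w) := by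
  rintro _ ⟨_, ⟨y, hy, rfl⟩, rfl⟩
  exact ⟨map f y, map_mem_exteriorPower f hy, by simp [hw]⟩

lemma map_exteriorPower_inf_ker_mulLeft_le {f : M →ₗ[R] M} {w : ExteriorAlgebra R M}
    (hw : map f w = w) (k : ℕ) :
    (⋀[R]^k M ⊓ (LinearMap.mulLeft R w).ker).map (map f).toLinearMap ≤
      ⋀[R]^k M ⊓ (LinearMap.mulLeft R w).ker := by
  rintro _ ⟨y, ⟨hy, hwy : w * y = 0⟩, rfl⟩
  refine ⟨map_mem_exteriorPower f hy, ?_⟩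
  simpa [hw] using congrArg (map f) hwy

end ExteriorPower

section Bivector

variable {R I J : Type*} [CommRing R] [Fintype I] [DecidableEq I] [Fintype J] [DecidableEq J]

/-- The bivector `∑ M a b • e_a ∧ e_b` with coefficient matrix `M`, grouped by the rows `M a` of
`M`. It only depends on `M` modulo symmetric matrices. -/
noncomputable def bivector : Matrix I I R →ₗ[R] ExteriorAlgebra R (I → R) where
  toFun M := ∑ a, ι R (Pi.single a 1) * ι R (M a)
  map_add' M N := by
    simp only [← Finset.sum_add_distrib, ← mul_add, ← map_add]
    rfl
  map_smul' c M := by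
    simp only [Finset.smul_sum, ← mul_smul_comm, ← map_smul]
    rfl

lemma bivector_apply (M : Matrix I I R) :
    bivector M = ∑ a, ι R (Pi.single a 1) * ι R (M a) :=
  rfl

lemma bivector_eq_sum_smul (M : Matrix I I R) :
    bivector M =
      ∑ p : I × I, M p.1 p.2 • (ι R (Pi.single p.1 (1 : R)) * ι R (Pi.single p.2 1)) := by
  rw [bivector_apply, Fintype.sum_prod_type]
  refine Finset.sum_congr rfl fun a _ => ?_
  conv_lhs => rw [pi_eq_sum_univ' (M a)]
  simp only [map_sum, map_smul, Finset.mul_sum, mul_smul_comm]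

lemma bivector_eq_zero_of_isSymm {M : Matrix I I R} (hM : M.IsSymm) : bivector M = 0 := by
  rw [bivector_eq_sum_smul]
  refine Finset.sum_involution (fun p _ => p.swap) (fun p _ => ?_) (fun p _ hp hswap => hp ?_)
    (fun _ _ => Finset.mem_univ _) (fun p _ => p.swap_swap)
  · rw [Prod.fst_swap, Prod.snd_swap, hM.apply, ← smul_add, ι_add_mul_swap, smul_zero]
  · rw [show p.2 = p.1 from congrArg Prod.fst hswap, ι_sq_zero, smul_zero]

lemma map_bivector (A : Matrix J I R) (M : Matrix I I R) :
    map A.mulVecLin (bivector M) = bivector (A * M * Aᵀ) := by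
  have hcol (a : I) : A.mulVecLin (Pi.single a 1) = ∑ c, A c a • Pi.single c (1 : R) := by
    rw [mulVecLin_apply, mulVec_single_one]
    exact pi_eq_sum_univ' _
  have hrow (a : I) : A.mulVecLin (M a) = (M * Aᵀ) a := by
    ext c
    simp [mulVec, mul_apply, dotProduct, mul_comm]
  have hmul (c : J) : (A * (M * Aᵀ)) c = ∑ a, A c a • (M * Aᵀ) a := by
    ext d
    simp [mul_apply (M := A)]
  simp only [bivector_apply, map_sum, map_mul, map_apply_ι, hcol, hrow, Matrix.mul_assoc, hmul,
    map_smul, Finset.sum_mul, Finset.mul_sum, smul_mul_assoc, mul_smul_comm]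
  exact Finset.sum_comm

lemma bivector_mem_exteriorPower (M : Matrix I I R) : bivector M ∈ ⋀[R]^2 (I → R) := by
  rw [exteriorPower, pow_two, bivector_apply]
  exact Submodule.sum_mem _ fun a _ => Submodule.mul_mem_mul ⟨_, rfl⟩ ⟨_, rfl⟩

end Bivector

section BasisMonomial

variable {R I : Type*} [CommRing R] [DecidableEq I] {k : ℕ}

variable (R) in
/-- The monomial `e_{s 0} ∧ ⋯ ∧ e_{s (k-1)}` in the standard basis of `I → R`. -/
noncomputable def basisMonomial (s : Fin k → I) : ExteriorAlgebra R (I → R) :=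
  ιMulti R k fun i => Pi.single (s i) 1

/-- The linear form on the exterior algebra sending `v₀ ∧ ⋯ ∧ vₖ₋₁` to the minor `det (vᵢ (t j))`
and vanishing in degrees other than `k`. It reads off the coordinate along `basisMonomial R t`. -/
noncomputable def minorForm (t : Fin k → I) : ExteriorAlgebra R (I → R) →ₗ[R] R :=
  liftAlternating (Pi.single k (detRowAlternating.compLinearMap (LinearMap.funLeft R R t)))

lemma basisMonomial_mem_exteriorPower (s : Fin k → I) :
    basisMonomial R s ∈ ⋀[R]^k (I → R) :=
  ιMulti_range R k ⟨_, rfl⟩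

lemma basisMonomial_cons (a : I) (s : Fin k → I) :
    basisMonomial R (vecCons a s) = ι R (Pi.single a 1) * basisMonomial R s :=
  ιMulti_succ_apply _

lemma basisMonomial_eq_zero_of_not_injective {s : Fin k → I} (hs : ¬ s.Injective) :
    basisMonomial R s = 0 :=
  ιMulti_eq_zero_of_not_inj fun h => hs (h.of_comp (f := fun a => Pi.single a (1 : R)))

lemma minorForm_basisMonomial (s t : Fin k → I) :
    minorForm t (basisMonomial R s) = det ((1 : Matrix I I R).submatrix s t) := by
  rw [minorForm, basisMonomial, liftAlternating_apply_ιMulti, Pi.single_eq_same]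
  refine congrArg det ?_
  ext i j
  simp [one_apply, Pi.single_apply, eq_comm]

lemma minorForm_basisMonomial_self {s : Fin k → I} (hs : s.Injective) :
    minorForm s (basisMonomial R s) = 1 := by
  rw [minorForm_basisMonomial, submatrix_one s hs, det_one]

lemma minorForm_basisMonomial_eq_zero {s t : Fin k → I} {j : Fin k} (hj : ∀ i, s i ≠ t j) :
    minorForm t (basisMonomial R s) = 0 := by
  rw [minorForm_basisMonomial]
  exact det_eq_zero_of_column_eq_zero j fun i => one_apply_ne (hj i)

lemma basisMonomial_ne_zero [Nontrivial R] {s : Fin k → I} (hs : s.Injective) :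
    basisMonomial R s ≠ 0 := fun h => by
  simpa [h] using minorForm_basisMonomial_self (R := R) hs

end BasisMonomial

section SymplecticBivector

variable {l R : Type*} [CommRing R] [Fintype l] [DecidableEq l] {k : ℕ}

variable (l R) in
/-- The bivector `ω = ∑ᵢ eᵢ ∧ fᵢ` dual to the standard symplectic form, where `eᵢ` and `fᵢ` are the
basis vectors with indices `Sum.inl i` and `Sum.inr i`. -/
noncomputable def symplecticBivector : ExteriorAlgebra R (l ⊕ l → R) :=
  bivector (fromBlocks 0 1 0 0)

-- The coefficient matrix `U` of `ω` satisfies `U - Uᵀ = -J`, so `A U Aᵀ - U` is symmetric.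
lemma map_symplecticBivector {A : Matrix (l ⊕ l) (l ⊕ l) R} (hA : A ∈ symplecticGroup l R) :
    map A.mulVecLin (symplecticBivector l R) = symplecticBivector l R := by
  set U : Matrix (l ⊕ l) (l ⊕ l) R := fromBlocks 0 1 0 0 with hU
  have hJ : J l R = Uᵀ - U := by
    simp [J, hU, fromBlocks_transpose, sub_eq_add_neg, fromBlocks_neg, fromBlocks_add]
  have hsymm : (A * U * Aᵀ - U).IsSymm := by
    have h := SymplecticGroup.mem_iff.1 hA
    rw [hJ, mul_sub, sub_mul] at h
    rw [IsSymm, transpose_sub, transpose_mul, transpose_mul, transpose_transpose,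
      ← Matrix.mul_assoc, sub_eq_sub_iff_sub_eq_sub]
    exact h
  rw [symplecticBivector, map_bivector, ← sub_eq_zero, ← map_sub]
  exact bivector_eq_zero_of_isSymm hsymm

lemma symplecticBivector_mul_basisMonomial (s : Fin k → l ⊕ l) :
    symplecticBivector l R * basisMonomial R s =
      ∑ i, basisMonomial R (vecCons (Sum.inl i) (vecCons (Sum.inr i) s)) := by
  have hinl (i : l) : (fromBlocks 0 1 0 0 : Matrix (l ⊕ l) (l ⊕ l) R) (Sum.inl i) =
      Pi.single (Sum.inr i) 1 := by
    ext (_ | _) <;> simp [one_apply, Pi.single_apply, eq_comm]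
  have hinr (i : l) : (fromBlocks 0 1 0 0 : Matrix (l ⊕ l) (l ⊕ l) R) (Sum.inr i) = 0 := by
    ext (_ | _) <;> simp
  simp only [symplecticBivector, bivector_apply, Fintype.sum_sum_type, hinl, hinr, map_zero,
    mul_zero, Finset.sum_const_zero, add_zero, Finset.sum_mul, mul_assoc, basisMonomial_cons]

lemma symplecticBivector_mul_basisMonomial_ne_zero [Nontrivial R] {s : Fin k → l ⊕ l}
    (hs : s.Injective) {z : l} (hl : Sum.inl z ∉ Set.range s) (hr : Sum.inr z ∉ Set.range s) :
    symplecticBivector l R * basisMonomial R s ≠ 0 := fun h => by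
  let t (i : l) : Fin (k + 2) → l ⊕ l := vecCons (Sum.inl i) (vecCons (Sum.inr i) s)
  have ht : (t z).Injective := by
    refine Fin.cons_injective_iff.2 ⟨?_, Fin.cons_injective_iff.2 ⟨hr, hs⟩⟩
    rw [show vecCons _ s = Fin.cons _ s from rfl, Fin.range_cons]
    simpa using hl
  have hne (i : l) (hi : i ≠ z) : minorForm (t z) (basisMonomial R (t i)) = 0 := by
    refine minorForm_basisMonomial_eq_zero (j := 0) (Fin.cases ?_ (Fin.cases ?_ fun j => ?_))
    · simpa [t] using hi
    · simp [t]
    · exact fun hj => hl ⟨j, hj⟩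
  have hone : minorForm (t z) (symplecticBivector l R * basisMonomial R s) = 1 := by
    rw [symplecticBivector_mul_basisMonomial, map_sum,
      Finset.sum_eq_single z (fun i _ => hne i) (by simp)]
    exact minorForm_basisMonomial_self ht
  simp [h] at hone

lemma symplecticBivector_mul_basisMonomial_eq_zero {s : Fin k → l ⊕ l}
    (hs : Set.range Sum.inl ⊆ Set.range s) :
    symplecticBivector l R * basisMonomial R s = 0 := by
  rw [symplecticBivector_mul_basisMonomial]
  refine Finset.sum_eq_zero fun i _ => basisMonomial_eq_zero_of_not_injective fun h => ?_
  obtain ⟨j, hj⟩ := hs ⟨i, rfl⟩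
  exact absurd (@h 0 j.succ.succ (by simp [hj])) (by simp [Fin.ext_iff])

lemma symplecticBivector_mul_ne_basisMonomial_inl [Nontrivial R] {s : Fin k → l}
    (hs : s.Injective) (y : ExteriorAlgebra R (l ⊕ l → R)) :
    symplecticBivector l R * y ≠ basisMonomial R (Sum.inl ∘ s) := by
  intro h
  let P : Matrix (l ⊕ l) (l ⊕ l) R := fromBlocks 1 0 0 0
  have hP : map P.mulVecLin (symplecticBivector l R) = 0 := by
    simp [symplecticBivector, map_bivector, P, fromBlocks_transpose, fromBlocks_multiply]
  have hfix : map P.mulVecLin (basisMonomial R (Sum.inl ∘ s)) = basisMonomial R (Sum.inl ∘ s) := by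
    rw [basisMonomial, map_apply_ιMulti]
    congr 1
    ext _ (_ | _) <;> simp [P, one_apply, Pi.single_apply]
  have hne : basisMonomial R (Sum.inl ∘ s : Fin k → l ⊕ l) ≠ 0 :=
    basisMonomial_ne_zero (Sum.inl_injective.comp hs)
  exact hne (by rw [← hfix, ← h, map_mul, hP, zero_mul])

lemma exists_symplecticBivector_mul_ne_zero [Nontrivial R] (hk : k + 2 ≤ 2 * Fintype.card l) :
    ∃ x ∈ ⋀[R]^k (l ⊕ l → R), symplecticBivector l R * x ≠ 0 := by
  obtain ⟨z⟩ : Nonempty l := Fintype.card_pos_iff.1 (by lia)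
  obtain ⟨T, hT, hcard⟩ : ∃ T ⊆ ({Sum.inl z, Sum.inr z} : Finset (l ⊕ l))ᶜ, T.card = k := by
    apply Finset.exists_subset_card_eq
    rw [Finset.card_compl, Finset.card_pair (by simp), Fintype.card_sum]
    lia
  obtain ⟨s, hs, hrange⟩ := exists_injective_fin_range_eq hcard
  refine ⟨basisMonomial R s, basisMonomial_mem_exteriorPower s,
    symplecticBivector_mul_basisMonomial_ne_zero hs (z := z) ?_ ?_⟩ <;>
  · rw [hrange]
    exact fun h => by simpa using hT h

lemma exists_ne_zero_symplecticBivector_mul_eq_zero [Nontrivial R] (hle : Fintype.card l ≤ k)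
    (hk : k ≤ 2 * Fintype.card l) :
    ∃ x ∈ ⋀[R]^k (l ⊕ l → R), x ≠ 0 ∧ symplecticBivector l R * x = 0 := by
  obtain ⟨T, hT, -, hcard⟩ := Finset.exists_subsuperset_card_eq
    (Finset.subset_univ (Finset.univ.map (.inl : l ↪ l ⊕ l))) (n := k) (by simpa)
    (by simpa [← two_mul])
  obtain ⟨s, hs, hrange⟩ := exists_injective_fin_range_eq hcard
  refine ⟨basisMonomial R s, basisMonomial_mem_exteriorPower s, basisMonomial_ne_zero hs,
    symplecticBivector_mul_basisMonomial_eq_zero ?_⟩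
  rw [hrange]
  rintro _ ⟨i, rfl⟩
  exact hT (by simp)

end SymplecticBivector

section Invariant

variable {l R : Type*} [CommRing R] [Fintype l] [DecidableEq l]

/-- Stability of a submodule of the exterior algebra of the standard representation under the
induced action of the symplectic group. -/
def IsSymplecticInvariant (W : Submodule R (ExteriorAlgebra R (l ⊕ l → R))) : Prop :=
  ∀ A ∈ symplecticGroup l R, W.map (map A.mulVecLin).toLinearMap ≤ W

variable [Nontrivial R]

lemma exists_isSymplecticInvariant_of_add_two_le {k : ℕ} (hk : k + 2 ≤ Fintype.card l) :
    ∃ W ≤ ⋀[R]^(k + 2) (l ⊕ l → R),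
      IsSymplecticInvariant W ∧ W ≠ ⊥ ∧ W ≠ ⋀[R]^(k + 2) (l ⊕ l → R) := by
  refine ⟨(⋀[R]^k (l ⊕ l → R)).map (LinearMap.mulLeft R (symplecticBivector l R)), ?_,
    fun A hA => map_map_mulLeft_exteriorPower_le (map_symplecticBivector hA) k,
    fun hbot => ?_, fun htop => ?_⟩
  · rintro _ ⟨y, hy, rfl⟩
    rw [add_comm]
    exact SetLike.mul_mem_graded (A := fun i => ⋀[R]^i (l ⊕ l → R))
      (bivector_mem_exteriorPower _) hy
  · obtain ⟨x, hx, hne⟩ := exists_symplecticBivector_mul_ne_zero (l := l) (R := R) (k := k) (by lia)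
    exact hne ((Submodule.mem_bot R).1 (hbot ▸ Submodule.mem_map_of_mem hx))
  · obtain ⟨s⟩ : Nonempty (Fin (k + 2) ↪ l) :=
      Function.Embedding.nonempty_of_card_le (by simpa)
    obtain ⟨y, -, hy⟩ := htop ▸ basisMonomial_mem_exteriorPower (Sum.inl ∘ s)
    exact symplecticBivector_mul_ne_basisMonomial_inl s.injective y hy

lemma exists_isSymplecticInvariant_of_card_le {m : ℕ} (hle : Fintype.card l ≤ m)
    (hm : m + 2 ≤ 2 * Fintype.card l) :
    ∃ W ≤ ⋀[R]^m (l ⊕ l → R),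
      IsSymplecticInvariant W ∧ W ≠ ⊥ ∧ W ≠ ⋀[R]^m (l ⊕ l → R) := by
  refine ⟨⋀[R]^m (l ⊕ l → R) ⊓ (LinearMap.mulLeft R (symplecticBivector l R)).ker, inf_le_left,
    fun A hA => map_exteriorPower_inf_ker_mulLeft_le (map_symplecticBivector hA) m,
    fun hbot => ?_, fun htop => ?_⟩
  · obtain ⟨x, hx, hne, hωx⟩ :=
      exists_ne_zero_symplecticBivector_mul_eq_zero (l := l) (R := R) hle (by lia)
    exact hne ((Submodule.mem_bot R).1 (hbot ▸ ⟨hx, hωx⟩))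
  · obtain ⟨x, hx, hne⟩ := exists_symplecticBivector_mul_ne_zero (l := l) (R := R) hm
    exact hne (inf_eq_left.1 htop hx)

end Invariant

end SymplecticExterior

open SymplecticExterior in
theorem spC_standard_not_mDense_general {l R : Type*} [CommRing R] [Nontrivial R] [Fintype l]
    [DecidableEq l] {m : ℕ} (h1 : 1 < m) (hm : m < 2 * Fintype.card l - 1) :
    ∃ W ≤ ⋀[R]^m (l ⊕ l → R),
      IsSymplecticInvariant W ∧ W ≠ ⊥ ∧ W ≠ ⋀[R]^m (l ⊕ l → R) := by
  rcases le_total m (Fintype.card l) with hle | hle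
  · obtain ⟨k, rfl⟩ := Nat.exists_eq_add_of_le' h1
    exact exists_isSymplecticInvariant_of_add_two_le hle
  · exact exists_isSymplecticInvariant_of_card_le hle (by lia)

/-- For `n ≥ 2`, the standard representation of the symplectic group `Sp_{2n}(ℂ)`
(matrices `A` with `AᵀJA = J` where `J = [[0, -I_n], [I_n, 0]]`) on `ℂ^{2n}` is not
`m`-dense for `1 < m < 2n - 1`: the induced representation on `⋀^m ℂ^{2n}` is not
irreducible. -/
theorem spC_standard_not_mDense (n : ℕ) (hn : 2 ≤ n) (m : ℕ) (h1 : 1 < m)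
    (hm : m < 2 * n - 1) :
    ¬ (⋀[ℂ]^m (Fin n ⊕ Fin n → ℂ) ≠ ⊥ ∧
       ∀ W : Submodule ℂ (ExteriorAlgebra ℂ (Fin n ⊕ Fin n → ℂ)),
         W ≤ ⋀[ℂ]^m (Fin n ⊕ Fin n → ℂ) →
         (∀ A : Matrix (Fin n ⊕ Fin n) (Fin n ⊕ Fin n) ℂ,
           Aᵀ * Matrix.fromBlocks 0 (-1) 1 0 * A = Matrix.fromBlocks 0 (-1) 1 0 →
           W.map (ExteriorAlgebra.map A.mulVecLin).toLinearMap ≤ W) →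
         W = ⊥ ∨ W = ⋀[ℂ]^m (Fin n ⊕ Fin n → ℂ)) := by
  rintro ⟨-, H⟩
  obtain ⟨W, hW, hinv, hbot, htop⟩ :=
    spC_standard_not_mDense_general (l := Fin n) (R := ℂ) h1 (by simpa using hm)
  exact (H W hW fun A hA => hinv A (SymplecticGroup.mem_iff'.2 hA)).elim hbot htop
end
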